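/- arXiv:2605.14955 — 2 statements merged into one kernel-verified Lean document; each statement's English description precedes it below -/
import Mathlib

section
/- Let a, s, y be real numbers with 0 < a ≤ s ≤ 1/2 and 0 ≤ y ≤ 1/2 − s. Let (x_j, y_j), j in a finite index set J, be real pairs satisfying x_j ≥ 0, y_j ≥ 0, x_j + y_j ≤ s for all j, and Σ_{j∈J} y_j ≤ s + a. Then F(a, 1 − a − s − y) + Σ_{j∈J} F(x_j, y_j) + y²/2 ≤ 1/8. -/
open Classical in
/-- `F(ℓ,m) = (m - ℓ/2)ℓ` if `m ≥ ℓ`, and `m²/2` if `m < ℓ`. -/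
noncomputable def Freal (l m : ℝ) : ℝ :=
  if l ≤ m then (m - l / 2) * l else m ^ 2 / 2

open Classical in
/-- `φ(r) = r²/2` for `0 ≤ r ≤ 1/2` and `φ(r) = (1-r)(3r-1)/2` for `1/2 ≤ r ≤ 1`. -/
noncomputable def phi (r : ℝ) : ℝ :=
  if r ≤ 1 / 2 then r ^ 2 / 2 else (1 - r) * (3 * r - 1) / 2

open Classical in
/-- The function `V` on `[1,2]`. -/
noncomputable def Vfun (T : ℝ) : ℝ :=
  if T ≤ 4 / 3 then (2 - T) * (3 * T - 2) / 4
  else if T ≤ 3 / 2 then 3 / 2 * T ^ 2 - 4 * T + 3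
  else (3 - T) * (T - 1) / 2

/-! Why the inequality holds. Since `F(ℓ,m)` increases with `ℓ`, the constraint `x_j + y_j ≤ s` gives
`F(x_j,y_j) ≤ s² φ(r_j)` with `r_j = y_j / s ∈ [0,1]` (`Freal_le_phi`). So one has to maximise `∑ φ(r_j)`
under a budget `∑ r_j ≤ T = 1 + a/s ∈ [1,2]`. The maximum is `V(T)`; extending `V` to `[0,2]` by the
optimal value for small budgets (`Vext`), this is a dynamic-programming statement: the inequality
`φ(r) + V(u) ≤ V(r+u)` (`Vext_step`) gives `∑ φ(r_j) ≤ V(∑ r_j)` by induction on the number of terms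
(`sum_phi`), and `V` is monotone (`Vext_mono`). What is left is the inequality
`F(a, 1-a-s-y) + s² V(1+a/s) + y²/2 ≤ 1/8` in three real variables (`final_ineq`), piecewise quadratic
since `s² V(1+a/s)` is piecewise a quadratic form in `(s,a)`.
-/

/-- The largest value of `∑ φ(r_j)` with `r_j ∈ [0,1]` and `∑ r_j ≤ T`, for `T ∈ [0,2]`; it equals
`Vfun` on `(1,2]`. On `[0,2/3]` a single term is optimal, so the value is `φ(T)`; on `[2/3,1]` the
optimum has two terms, `1 - T/2` and `3T/2 - 1`. -/
noncomputable def Vext (T : ℝ) : ℝ :=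
  if T ≤ 1 / 2 then T ^ 2 / 2
  else if T ≤ 2 / 3 then (1 - T) * (3 * T - 1) / 2
  else if T ≤ 1 then 3 / 4 * T ^ 2 - T + 1 / 2
  else Vfun T

set_option maxHeartbeats 4000000 in
/-- The dynamic-programming inequality for `Vext`: a term `r` together with an optimal family of budget
`u` is a family of budget `r + u`. -/
theorem Vext_step (r u : ℝ) (hr : 0 ≤ r) (hr1 : r ≤ 1) (hu : 0 ≤ u) (h : r + u ≤ 2) :
    phi r + Vext u ≤ Vext (r + u) := by
  unfold Vext phi Vfun
  split_ifs <;> first | (exfalso; linarith) | skip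
  all_goals (try simp only [not_le] at *)
  -- In the tight cases the difference of the two sides is, up to a factor, the square of a linear form
  -- vanishing where `r` belongs to an optimal family of budget `r + u`.
  all_goals
    first
    | nlinarith
    | nlinarith [sq_nonneg (3 * u + r - 2), sq_nonneg (3 * r + u - 2),
        sq_nonneg (4 - 2 * r - 3 * u), sq_nonneg (r - u), sq_nonneg (2 * r + u - 2),
        sq_nonneg (2 * r - u)]

theorem Vext_mono (S T : ℝ) (h0 : 0 ≤ S) (h : S ≤ T) (h2 : T ≤ 2) : Vext S ≤ Vext T := by
  unfold Vext Vfun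
  split_ifs <;> first | (exfalso; linarith) | skip
  all_goals (try simp only [not_le] at *)
  all_goals nlinarith

theorem sum_phi {ι : Type*} (J : Finset ι) (r : ι → ℝ) (h0 : ∀ j ∈ J, 0 ≤ r j)
    (h1 : ∀ j ∈ J, r j ≤ 1) (h2 : ∑ j ∈ J, r j ≤ 2) :
    ∑ j ∈ J, phi (r j) ≤ Vext (∑ j ∈ J, r j) := by
  classical
  induction J using Finset.induction_on with
  | empty => simp [Vext]
  | insert i J hi ih =>
    rw [Finset.sum_insert hi] at h2 ⊢
    rw [Finset.sum_insert hi]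
    simp only [Finset.mem_insert, forall_eq_or_imp] at h0 h1
    have hn := Finset.sum_nonneg h0.2
    have := ih h0.2 h1.2 (by linarith [h0.1])
    linarith [Vext_step (r i) (∑ j ∈ J, r j) h0.1 h1.1 hn h2]

/-- As `F(·,y)` is increasing, the worst case is `x = s - y`, where `F` equals `s² φ(y/s)`. -/
theorem Freal_le_phi (x y s : ℝ) (hs : 0 < s) (h : x + y ≤ s) :
    Freal x y ≤ s ^ 2 * phi (y / s) := by
  have e : s ^ 2 * phi (y / s) =
      if y / s ≤ 1 / 2 then y ^ 2 / 2 else (s - y) * (3 * y - s) / 2 := by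
    unfold phi
    split_ifs <;> field_simp
  rw [e]
  simp only [div_le_iff₀ hs]
  unfold Freal
  split_ifs <;> try simp only [not_le] at *
  all_goals nlinarith

theorem final_ineq (a s y : ℝ)
    (ha0 : 0 < a) (has : a ≤ s) (hs : s ≤ 1 / 2)
    (hy0 : 0 ≤ y) (hy : y ≤ 1 / 2 - s) :
    Freal a (1 - a - s - y) + s ^ 2 * Vext ((s + a) / s) + y ^ 2 / 2 ≤ 1 / 8 := by
  have hs0 : 0 < s := by linarith
  have e : s ^ 2 * Vext ((s + a) / s) =
      if a ≤ s / 3 then (s - a) * (s + 3 * a) / 4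
      else if a ≤ s / 2 then s ^ 2 / 2 - s * a + 3 / 2 * a ^ 2
      else (2 * s - a) * a / 2 := by
    unfold Vext Vfun
    simp only [div_le_iff₀ hs0]
    split_ifs <;> first | (exfalso; linarith) | (field_simp; ring)
  -- For `s/2 < a ≤ 1-a-s-y` the terms in `s` cancel and this is the whole claim. It is convex in
  -- `y ∈ [0, 1/2 - a]`, with values `1/8 - 2(a - 1/4)²` and `1/8 - a²/2` at the endpoints.
  have key : a - 2 * a ^ 2 - y * a + y ^ 2 / 2 ≤ 1 / 8 := by
    rcases le_total y (2 * a) with h | h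
    · nlinarith [sq_nonneg (a - 1 / 4), mul_nonneg hy0 (sub_nonneg.2 h)]
    · nlinarith [mul_nonneg hy0 (by linarith : 0 ≤ 1 / 2 - a - y),
        mul_nonneg (by linarith : 0 ≤ y - 2 * a) (by linarith : 0 ≤ 1 / 2 - a - y),
        mul_nonneg (by linarith : 0 ≤ 1 / 2 - a - y) (by linarith : 0 ≤ 1 / 2 - a), sq_nonneg a]
  rw [e]
  unfold Freal
  split_ifs <;> try simp only [not_le] at *
  all_goals first | linarith | nlinarith

/-- For `0 < a ≤ s ≤ 1/2`, `0 ≤ y ≤ 1/2 - s`, and admissible families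
`(x_j, y_j)`, one has `F(a, 1-a-s-y) + Σ F(x_j,y_j) + y²/2 ≤ 1/8`. -/
theorem stmt_17 {ι : Type*} (J : Finset ι) (x' y' : ι → ℝ) (a s y : ℝ)
    (ha0 : 0 < a) (has : a ≤ s) (hs : s ≤ 1 / 2)
    (hy0 : 0 ≤ y) (hy : y ≤ 1 / 2 - s)
    (hx' : ∀ j ∈ J, 0 ≤ x' j) (hy' : ∀ j ∈ J, 0 ≤ y' j)
    (hxy' : ∀ j ∈ J, x' j + y' j ≤ s)
    (hsum : ∑ j ∈ J, y' j ≤ s + a) :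
    Freal a (1 - a - s - y) + (∑ j ∈ J, Freal (x' j) (y' j)) + y ^ 2 / 2 ≤ 1 / 8 := by
  have hs0 : 0 < s := by linarith
  have hsum' : ∑ j ∈ J, y' j / s ≤ (s + a) / s := by
    rw [← Finset.sum_div]
    gcongr
  have hT : (s + a) / s ≤ 2 := by
    rw [div_le_iff₀ hs0]
    linarith
  have h0 : ∀ j ∈ J, 0 ≤ y' j / s := fun j hj => div_nonneg (hy' j hj) hs0.le
  have h1 : ∀ j ∈ J, y' j / s ≤ 1 := fun j hj => by
    rw [div_le_one hs0]
    linarith [hx' j hj, hxy' j hj]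
  have hF : ∑ j ∈ J, Freal (x' j) (y' j) ≤ s ^ 2 * Vext ((s + a) / s) := calc
    _ ≤ ∑ j ∈ J, s ^ 2 * phi (y' j / s) :=
        Finset.sum_le_sum fun j hj => Freal_le_phi _ _ s hs0 (hxy' j hj)
    _ = s ^ 2 * ∑ j ∈ J, phi (y' j / s) := by rw [Finset.mul_sum]
    _ ≤ s ^ 2 * Vext ((s + a) / s) := by
        gcongr
        exact (sum_phi J _ h0 h1 (hsum'.trans hT)).trans
          (Vext_mono _ _ (Finset.sum_nonneg h0) hsum' hT)
  linarith [final_ineq a s y ha0 has hs hy0 hy]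
end

section
/- Let a, b be two distinct letters and for each positive integer k let w_k = (a^k b a^{k−1} b)^4 a^{k−1}. Then |w_k| = 9k + 3 and RP(w_k) = 9k² + 9k + 1, where RP(w_k) is the number of distinct factors of w_k that are rational powers of exponent at least 2 of some nonempty word. -/
/-!
Write `N = 2k + 1`. The word `w` is the length-`9k + 3` prefix of the `N`-periodic infinite word
`perLetter a b k`, whose letter is `b` exactly at the positions congruent to `k` or `2k` mod `N`.
Its factors are the windows `win a b k s l` (start `s`, length `l`, `s + l ≤ 9k + 3`), and a word
is a rational power of exponent at least 2 exactly when it has a period `n ≥ 1` with twice `n` at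
most its length (`exists_isRatPow_iff`).

Let a window have such a period `n`. If it contains no `b`, it is `a ^ l` with `2 ≤ l ≤ k`. If
`l ≥ 2N`, it has period `N` and only the start modulo `N` matters. Otherwise `n < N`, and as
the window is at least `2n` long it contains two letters `b` at distance `n`, so that `n = k` or
`n = k + 1`; the window then lies inside the maximal run `a^(k-1) b a^(k-1) b a^(k-1)` of period
`k`, or inside the maximal run `a^(k-1) b a^k b a^(k-1)` of period `k + 1` (`classify`). Choosing one
window per word gives four explicit families (`reps`) on which distinct pairs give distinct words
(`win_injOn`). They have `k - 1`, `k(k+1)/2`, `k(k-1)/2` and `(4k+2)(2k+1)` elements, which add up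
to `9k² + 9k + 1`.
-/

/-- `wpow u k` is the concatenation of `k` copies of the word `u`. -/
def wpow {α : Type*} (u : List α) : ℕ → List α
  | 0 => []
  | n + 1 => u ++ wpow u n

/-- A nonempty word is primitive if it is not a `k`-th power, `k ≥ 2`, of any word. -/
def Primitive {α : Type*} (u : List α) : Prop :=
  u ≠ [] ∧ ∀ (v : List α) (k : ℕ), 2 ≤ k → u ≠ wpow v k

/-- `v` is a rational power of exponent at least 2 of the nonempty word `p`:
`v = p^k p'` with `k ≥ 2` an integer and `p'` a (possibly empty) proper prefix of `p`. -/
def IsRatPow {α : Type*} (p v : List α) : Prop :=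
  p ≠ [] ∧ ∃ (k : ℕ) (p' : List α), 2 ≤ k ∧ p' <+: p ∧ p' ≠ p ∧ v = wpow p k ++ p'

/-- Two words are conjugate. -/
def Conj {α : Type*} (u v : List α) : Prop :=
  ∃ x y, u = x ++ y ∧ v = y ++ x

/-- The set of factors of a word. -/
def Fac {α : Type*} (w : List α) : Set (List α) := {v | v <:+: w}

/-- `PerFac u i` is the set `[u]_i` of length-`i` factors of the infinite periodic
word `u^ω` (equivalently, of `u^(i+1)` when `u` is nonempty). -/
def PerFac {α : Type*} (u : List α) (i : ℕ) : Set (List α) :=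
  {v | v.length = i ∧ v <:+: wpow u (i + 1)}

/-- The small-circuit condition `SC_w(u,q)`: `q ≥ |u|`, `[u]_q ⊆ Fac(w)` and
`[u]_{q+1} ⊆ Fac(w)`. -/
def SC {α : Type*} (w u : List α) (q : ℕ) : Prop :=
  u.length ≤ q ∧ PerFac u q ⊆ Fac w ∧ PerFac u (q + 1) ⊆ Fac w

/-- `M(u)`: the number of integers `q` for which `SC_w(u,q)` holds. -/
noncomputable def Mnum {α : Type*} (w u : List α) : ℕ :=
  Set.ncard {q : ℕ | SC w u q}

/-- `QClass_w(u)`: the set of factors of `w` that are rational powers of exponent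
at least 2 of some conjugate of `u`. -/
def QClass {α : Type*} (w u : List α) : Set (List α) :=
  {v | v <:+: w ∧ ∃ p, Conj u p ∧ IsRatPow p v}

/-- `RP(w)`: the number of distinct factors of `w` that are rational powers of
exponent at least 2 of some nonempty word. -/
noncomputable def RP {α : Type*} (w : List α) : ℕ :=
  Set.ncard {v | v <:+: w ∧ ∃ p, IsRatPow p v}

/-! ### Rational powers and periods -/

section Words

variable {α : Type*}

theorem wpow_length (u : List α) (n : ℕ) : (wpow u n).length = n * u.length := by
  induction n with
  | zero => simp [wpow]
  | succ n ih => simp [wpow, ih]; ring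

/-- A rational power of `p` is a prefix of itself shifted by `p`. -/
theorem wpow_prefix_shift (p q : List α) (hq : q <+: p) (n : ℕ) :
    wpow p n ++ q <+: p ++ (wpow p n ++ q) := by
  induction n with
  | zero => simpa [wpow] using hq.trans (List.prefix_append p q)
  | succ n ih =>
    simp only [wpow, List.append_assoc]
    exact (List.prefix_append_right_inj p).2 ih

/-- Conversely, peeling off copies of `p` shows that a prefix of itself shifted by `p` is a
rational power of `p` (with an arbitrary integer part of the exponent). -/
theorem exists_wpow_of_prefix_shift (p : List α) (hp : p ≠ []) :
    ∀ (m : ℕ) (v : List α), v.length ≤ m → v <+: p ++ v →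
      ∃ (n : ℕ) (q : List α), q <+: p ∧ q ≠ p ∧ v = wpow p n ++ q := by
  have hpl : 0 < p.length := List.length_pos_iff.2 hp
  intro m
  induction m with
  | zero =>
    intro v hv _
    have : v = [] := List.length_eq_zero_iff.1 (by omega)
    exact ⟨0, [], List.nil_prefix, fun h => hp h.symm, by simp [wpow, this]⟩
  | succ m ih =>
    intro v hv hpre
    by_cases hlt : v.length < p.length
    · refine ⟨0, v, List.prefix_of_prefix_length_le hpre (List.prefix_append _ _) hlt.le, ?_, by
        simp [wpow]⟩
      rintro rfl
      exact lt_irrefl _ hlt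
    · have hpv : p <+: v :=
        List.prefix_of_prefix_length_le (List.prefix_append _ _) hpre (by omega)
      obtain ⟨t, rfl⟩ := hpv
      rw [List.prefix_append_right_inj] at hpre
      obtain ⟨n, q, h1, h2, h3⟩ := ih t (by simp at hv; omega) hpre
      exact ⟨n + 1, q, h1, h2, by simp only [wpow, List.append_assoc]; rw [← h3]⟩

/-- Being a rational power of exponent at least 2 means having a period at most half the
length. -/
theorem exists_isRatPow_iff (v : List α) :
    (∃ p, IsRatPow p v) ↔
      ∃ n, 1 ≤ n ∧ 2 * n ≤ v.length ∧ ∀ i, i + n < v.length → v[i]? = v[i + n]? := by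
  constructor
  · rintro ⟨p, hp, n, q, hn, hq, -, hv⟩
    have hpl : 0 < p.length := List.length_pos_iff.2 hp
    refine ⟨p.length, hpl, ?_, ?_⟩
    · rw [hv, List.length_append, wpow_length]
      nlinarith
    · intro i hi
      have h := wpow_prefix_shift p q hq n
      rw [← hv] at h
      obtain ⟨t, ht⟩ := h
      have h1 : (v ++ t)[i + p.length]? = (p ++ v)[i + p.length]? := by rw [ht]
      rw [List.getElem?_append_left hi, List.getElem?_append_right (by omega)] at h1
      rw [h1]; simp
  · rintro ⟨n, hn, hl, h⟩
    have hp : v.take n ≠ [] := by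
      intro h0
      have := congrArg List.length h0
      simp at this
      have h2 : v.length = 0 := by
        rcases this with h | h
        · omega
        · simp [h]
      omega
    have hpl : (v.take n).length = n := by simp; omega
    have hdrop : v.drop n <+: v := by
      rw [List.prefix_iff_getElem?]
      intro i hi
      simp only [List.length_drop] at hi
      rw [h i (by omega), List.getElem_drop, Nat.add_comm i n]
      exact List.getElem?_eq_getElem _
    have hpre : v <+: v.take n ++ v := by
      conv_lhs => rw [← List.take_append_drop n v]
      exact (List.prefix_append_right_inj _).2 hdrop
    obtain ⟨m, q, h1, h2, h3⟩ := exists_wpow_of_prefix_shift _ hp _ v le_rfl hpre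
    refine ⟨v.take n, hp, m, q, ?_, h1, h2, h3⟩
    have hql : q.length < n := by
      have hle := h1.length_le
      rw [hpl] at hle
      refine lt_of_le_of_ne hle fun he => h2 (h1.eq_of_length (by omega))
    have hlen := congrArg List.length h3
    rw [List.length_append, wpow_length, hpl] at hlen
    by_contra! hm
    have : m * n ≤ 1 * n := Nat.mul_le_mul_right _ (by omega)
    omega

/-! ### The periodic infinite word and its windows -/

open Classical in
/-- The letter at position `i` of the infinite periodic word `(a^k b a^(k-1) b)^ω`. -/
noncomputable def perLetter (a b : α) (k i : ℕ) : α :=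
  if i % (2 * k + 1) = k ∨ i % (2 * k + 1) = 2 * k then b else a

/-- The factor of length `l` starting at position `s` of `(a^k b a^(k-1) b)^ω`. -/
noncomputable def win (a b : α) (k s l : ℕ) : List α :=
  (List.range' s l).map (perLetter a b k)

variable (a b : α) (k : ℕ)

@[simp] theorem win_length (s l : ℕ) : (win a b k s l).length = l := by simp [win]

theorem win_getElem? (s l i : ℕ) (hi : i < l) :
    (win a b k s l)[i]? = some (perLetter a b k (s + i)) := by
  simp [win, hi]

theorem win_append (s l m : ℕ) : win a b k s (l + m) = win a b k s l ++ win a b k (s + l) m := by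
  simp [win, ← List.map_append]

theorem win_eq_iff (s t l : ℕ) :
    win a b k s l = win a b k t l ↔ ∀ i < l, perLetter a b k (s + i) = perLetter a b k (t + i) := by
  constructor
  · intro h i hi
    have := congrArg (fun v : List α => v[i]?) h
    rw [win_getElem? _ _ _ _ _ _ hi, win_getElem? _ _ _ _ _ _ hi] at this
    exact Option.some.inj this
  · intro h
    apply List.ext_getElem?
    intro i
    by_cases hi : i < l
    · rw [win_getElem? _ _ _ _ _ _ hi, win_getElem? _ _ _ _ _ _ hi, h i hi]
    · rw [List.getElem?_eq_none (by simpa using hi), List.getElem?_eq_none (by simpa using hi)]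

theorem perLetter_add (q i : ℕ) :
    perLetter a b k ((2 * k + 1) * q + i) = perLetter a b k i := by
  simp [perLetter]

theorem win_add (q s l : ℕ) : win a b k ((2 * k + 1) * q + s) l = win a b k s l := by
  rw [win_eq_iff]
  intro i _
  rw [add_assoc, perLetter_add]

variable {a b}

theorem perLetter_eq_or (i : ℕ) : perLetter a b k i = a ∨ perLetter a b k i = b := by
  unfold perLetter
  split_ifs <;> simp

theorem mod_small {k i : ℕ} (hi : i < 2 * (2 * k + 1)) :
    i % (2 * k + 1) = if i < 2 * k + 1 then i else i - (2 * k + 1) := by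
  split_ifs with h
  · exact Nat.mod_eq_of_lt h
  · rw [Nat.mod_eq_sub_mod (by omega), Nat.mod_eq_of_lt (by omega)]

/-- The positions of the letter `b` in the first two periods. -/
theorem perLetter_eq_b (hab : a ≠ b) {i : ℕ} (hi : i < 2 * (2 * k + 1)) :
    perLetter a b k i = b ↔ i = k ∨ i = 2 * k ∨ i = 3 * k + 1 ∨ i = 4 * k + 1 := by
  unfold perLetter
  rw [mod_small hi]
  split_ifs with h1 h2 h2 <;> simp [hab] <;> omega

theorem win_eq_replicate_a {s l : ℕ} (h : ∀ i < l, perLetter a b k (s + i) = a) :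
    win a b k s l = List.replicate l a := by
  rw [List.eq_replicate_iff]
  refine ⟨by simp, fun x hx => ?_⟩
  simp only [win, List.mem_map, List.mem_range'_1] at hx
  obtain ⟨j, hj, rfl⟩ := hx
  have := h (j - s) (by omega)
  rwa [show s + (j - s) = j by omega] at this

theorem perLetter_eq_a (hab : a ≠ b) {i : ℕ} (hi : i < 2 * (2 * k + 1))
    (h : ¬(i = k ∨ i = 2 * k ∨ i = 3 * k + 1 ∨ i = 4 * k + 1)) : perLetter a b k i = a :=
  (perLetter_eq_or k i).resolve_right fun hb => h ((perLetter_eq_b k hab hi).1 hb)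

theorem word_eq (hab : a ≠ b) (hk : 1 ≤ k) :
    wpow (List.replicate k a ++ [b] ++ List.replicate (k - 1) a ++ [b]) 4
      ++ List.replicate (k - 1) a = win a b k 0 (9 * k + 3) := by
  have hb : ∀ s, (s = k ∨ s = 2 * k) → win a b k s 1 = [b] := by
    intro s hs
    simp only [win, List.range'_one, List.map_cons, List.map_nil]
    rw [(perLetter_eq_b k hab (by omega)).2 (by omega)]
  have e1 : win a b k 0 k = List.replicate k a :=
    win_eq_replicate_a k fun i hi => perLetter_eq_a k hab (by omega) (by omega)
  have e2 : win a b k (k + 1) (k - 1) = List.replicate (k - 1) a :=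
    win_eq_replicate_a k fun i hi => perLetter_eq_a k hab (by omega) (by omega)
  have e3 : win a b k 0 (k - 1) = List.replicate (k - 1) a :=
    win_eq_replicate_a k fun i hi => perLetter_eq_a k hab (by omega) (by omega)
  have hblock : List.replicate k a ++ [b] ++ List.replicate (k - 1) a ++ [b]
      = win a b k 0 (2 * k + 1) := by
    rw [show 2 * k + 1 = k + 1 + (k - 1) + 1 by omega, win_append, win_append, win_append,
      e1, hb _ (by omega), hb _ (by omega), zero_add, e2]
  have hstep : ∀ l, win a b k 0 ((2 * k + 1) + l) = win a b k 0 (2 * k + 1) ++ win a b k 0 l := by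
    intro l
    have h := win_add a b k 1 0 l
    rw [mul_one, add_zero] at h
    rw [win_append, zero_add, h]
  rw [hblock, ← e3, show 9 * k + 3 = (2 * k + 1) + ((2 * k + 1) + ((2 * k + 1) +
    ((2 * k + 1) + (k - 1)))) by omega, hstep, hstep, hstep, hstep]
  simp only [wpow, List.append_assoc, List.append_nil]

theorem infix_win_iff (n : ℕ) (v : List α) :
    v <:+: win a b k 0 n ↔ ∃ s l, s + l ≤ n ∧ v = win a b k s l := by
  constructor
  · rintro ⟨x, y, h⟩
    refine ⟨x.length, v.length, ?_, ?_⟩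
    · have := congrArg List.length h
      simp at this; omega
    · apply List.ext_getElem?
      intro i
      by_cases hi : i < v.length
      · rw [win_getElem? _ _ _ _ _ _ hi]
        have hl := congrArg List.length h
        simp at hl
        have h2 := win_getElem? a b k 0 n (x.length + i) (by omega)
        rw [← h, List.append_assoc, List.getElem?_append_right (by omega),
          List.getElem?_append_left (by omega)] at h2
        simpa using h2
      · rw [List.getElem?_eq_none (by simpa using hi), List.getElem?_eq_none (by simpa using hi)]
  · rintro ⟨s, l, hn, rfl⟩
    refine ⟨win a b k 0 s, win a b k (s + l) (n - (s + l)), ?_⟩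
    conv_rhs => rw [show n = s + l + (n - (s + l)) by omega, win_append, win_append]
    simp

theorem ratPow_win_iff (s l : ℕ) :
    (∃ p, IsRatPow p (win a b k s l)) ↔
      ∃ n, 1 ≤ n ∧ 2 * n ≤ l ∧
        ∀ i, s ≤ i → i + n < s + l → perLetter a b k i = perLetter a b k (i + n) := by
  rw [exists_isRatPow_iff]
  simp only [win_length]
  refine exists_congr fun n => and_congr_right fun _ => and_congr_right fun _ => ?_
  constructor
  · intro h i hi hin
    have := h (i - s) (by omega)
    rw [win_getElem? _ _ _ _ _ _ (by omega), win_getElem? _ _ _ _ _ _ (by omega)] at this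
    rw [show s + (i - s) = i by omega, show s + (i - s + n) = i + n by omega] at this
    exact Option.some.inj this
  · intro h i hi
    rw [win_getElem? _ _ _ _ _ _ (by omega), win_getElem? _ _ _ _ _ _ (by omega),
      h (s + i) (by omega) (by omega), add_assoc]

/-! ### Representatives of the rational powers -/

/-- The chosen pairs (length, start), in four families: powers of `a`, windows in the run of
period `k`, windows in the run of period `k + 1`, and windows of length at least two periods
`2k + 1`. -/
def IsRep (k : ℕ) (x : ℕ × ℕ) : Prop :=
  (2 ≤ x.1 ∧ x.1 ≤ k ∧ x.2 = 0) ∨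
  (2 * k ≤ x.1 ∧ 1 ≤ x.2 ∧ x.2 + x.1 ≤ 3 * k) ∨
  (2 * k + 2 ≤ x.1 ∧ k + 1 ≤ x.2 ∧ x.2 + x.1 ≤ 4 * k + 1) ∨
  (4 * k + 2 ≤ x.1 ∧ x.2 ≤ 2 * k ∧ x.2 + x.1 ≤ 9 * k + 3)

theorem IsRep.ratPow (hab : a ≠ b) (hk : 1 ≤ k) {x : ℕ × ℕ} (hx : IsRep k x) :
    x.2 + x.1 ≤ 9 * k + 3 ∧ ∃ p, IsRatPow p (win a b k x.2 x.1) := by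
  obtain ⟨l, s⟩ := x
  rw [ratPow_win_iff]
  rcases hx with h | h | h | h <;> dsimp only at h ⊢ <;> refine ⟨by omega, ?_⟩
  · refine ⟨1, le_rfl, by omega, fun i h1 h2 => ?_⟩
    rw [perLetter_eq_a k hab (by omega) (by omega), perLetter_eq_a k hab (by omega) (by omega)]
  · refine ⟨k, by omega, by omega, fun i h1 h2 => ?_⟩
    by_cases hi : i = k
    · rw [(perLetter_eq_b k hab (by omega)).2 (by omega),
        (perLetter_eq_b k hab (by omega)).2 (by omega)]
    · rw [perLetter_eq_a k hab (by omega) (by omega), perLetter_eq_a k hab (by omega) (by omega)]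
  · refine ⟨k + 1, by omega, by omega, fun i h1 h2 => ?_⟩
    by_cases hi : i = 2 * k
    · rw [(perLetter_eq_b k hab (by omega)).2 (by omega),
        (perLetter_eq_b k hab (by omega)).2 (by omega)]
    · rw [perLetter_eq_a k hab (by omega) (by omega), perLetter_eq_a k hab (by omega) (by omega)]
  · refine ⟨2 * k + 1, by omega, by omega, fun i h1 h2 => ?_⟩
    have := perLetter_add a b k 1 i
    rw [mul_one, add_comm] at this
    exact this.symm

/-- Two windows with the same word have `b` at the same offsets. -/
theorem offset_b {s t l i : ℕ} (h : win a b k s l = win a b k t l) (hi : i < l) :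
    perLetter a b k (s + i) = b ↔ perLetter a b k (t + i) = b := by
  rw [(win_eq_iff a b k s t l).1 h i hi]

theorem offset_pos {s t l : ℕ} (hab : a ≠ b) (h : win a b k s l = win a b k t l) (i : ℕ)
    (hi : i < l) (hs : s + i < 2 * (2 * k + 1)) (ht : t + i < 2 * (2 * k + 1)) :
    (s + i = k ∨ s + i = 2 * k ∨ s + i = 3 * k + 1 ∨ s + i = 4 * k + 1) ↔
    (t + i = k ∨ t + i = 2 * k ∨ t + i = 3 * k + 1 ∨ t + i = 4 * k + 1) := by
  rw [← perLetter_eq_b k hab hs, ← perLetter_eq_b k hab ht]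
  exact offset_b k h hi

theorem win_injOn (hab : a ≠ b) (hk : 1 ≤ k) {x y : ℕ × ℕ} (hx : IsRep k x) (hy : IsRep k y)
    (h : win a b k x.2 x.1 = win a b k y.2 y.1) : x = y := by
  obtain ⟨l, s⟩ := x
  obtain ⟨m, t⟩ := y
  dsimp only at h
  have hl : l = m := by simpa using congrArg List.length h
  subst hl
  have key := fun i => offset_pos k hab h i
  -- Comparing the two words at the offsets of the letters `b` of either window suffices.
  have k1 := key (k - s)
  have k2 := key (k - t)
  have k3 := key (2 * k - s)
  have k4 := key (2 * k - t)
  have k5 := key (3 * k + 1 - s)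
  have k6 := key (3 * k + 1 - t)
  clear key h
  have : s = t := by
    rcases hx with hx | hx | hx | hx <;> rcases hy with hy | hy | hy | hy <;>
      dsimp only at hx hy <;> omega
  rw [this]

/-- The windows that are rational powers: each has the same word as a representative. -/
theorem classify (hab : a ≠ b) (hk : 1 ≤ k) {s l : ℕ} (hsl : s + l ≤ 9 * k + 3)
    (hr : ∃ p, IsRatPow p (win a b k s l)) :
    ∃ x : ℕ × ℕ, IsRep k x ∧ win a b k x.2 x.1 = win a b k s l := by
  rw [ratPow_win_iff] at hr
  obtain ⟨n, hn, hnl, hper⟩ := hr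
  by_cases hlong : 4 * k + 2 ≤ l
  · have hmod : s % (2 * k + 1) < 2 * k + 1 := Nat.mod_lt _ (by omega)
    have hle := Nat.mod_le s (2 * k + 1)
    refine ⟨(l, s % (2 * k + 1)), Or.inr (Or.inr (Or.inr ⟨hlong, ?_, ?_⟩)), ?_⟩
    · dsimp only; omega
    · dsimp only; omega
    · have := win_add a b k (s / (2 * k + 1)) (s % (2 * k + 1)) l
      rw [Nat.div_add_mod] at this
      exact this.symm
  by_cases hnob : ∀ i < l, perLetter a b k (s + i) = a
  · have hlk : l ≤ k := by
      by_contra! hlk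
      have hmod : s % (2 * k + 1) < 2 * k + 1 := Nat.mod_lt _ (by omega)
      have hshift : ∀ i < l, perLetter a b k (s % (2 * k + 1) + i) = a := by
        intro i hi
        rw [← perLetter_add a b k (s / (2 * k + 1)), ← add_assoc, Nat.div_add_mod]
        exact hnob i hi
      -- Among `k + 1` consecutive positions one is congruent to `k` or `2k`.
      have hhit : ∃ i < l, perLetter a b k (s % (2 * k + 1) + i) = b := by
        rcases Nat.lt_or_ge k (s % (2 * k + 1)) with h | h
        · exact ⟨2 * k - s % (2 * k + 1), by omega,
            (perLetter_eq_b k hab (by omega)).2 (by omega)⟩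
        · exact ⟨k - s % (2 * k + 1), by omega,
            (perLetter_eq_b k hab (by omega)).2 (by omega)⟩
      obtain ⟨i, hi, hib⟩ := hhit
      exact hab ((hshift i hi).symm.trans hib)
    refine ⟨(l, 0), Or.inl ⟨by dsimp only; omega, hlk, rfl⟩, ?_⟩
    dsimp only
    rw [win_eq_replicate_a k hnob]
    exact win_eq_replicate_a k fun i hi => perLetter_eq_a k hab (by omega) (by omega)
  -- Since `2n ≤ l`, a letter `b` in the window has a neighbour at distance `n` in the window.
  obtain ⟨x, hsx, hxl, hxb, hxnb⟩ : ∃ x, s ≤ x ∧ x + n < s + l ∧ perLetter a b k x = b ∧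
      perLetter a b k (x + n) = b := by
    push Not at hnob
    obtain ⟨i, hi, hia⟩ := hnob
    have hib := (perLetter_eq_or k (s + i)).resolve_left hia
    by_cases hin : i + n < l
    · exact ⟨s + i, by omega, by omega, hib, by rw [← hper _ (by omega) (by omega), hib]⟩
    · have e : s + i - n + n = s + i := by omega
      exact ⟨s + i - n, by omega, by omega,
        by rw [hper _ (by omega) (by omega), e, hib], by rw [e, hib]⟩
  obtain ⟨q, r, hr, rfl⟩ : ∃ q r, r < 2 * k + 1 ∧ x = (2 * k + 1) * q + r :=
    ⟨x / (2 * k + 1), x % (2 * k + 1), Nat.mod_lt _ (by omega), (Nat.div_add_mod _ _).symm⟩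
  rw [perLetter_add, perLetter_eq_b k hab (by omega)] at hxb
  rw [add_assoc, perLetter_add, perLetter_eq_b k hab (by omega)] at hxnb
  -- The period condition, read inside the period containing the first `b`.
  have hloc : ∀ j, s ≤ (2 * k + 1) * q + j → (2 * k + 1) * q + j + n < s + l →
      perLetter a b k j = perLetter a b k (j + n) := by
    intro j h1 h2
    have := hper _ h1 h2
    rwa [add_assoc, perLetter_add, perLetter_add] at this
  have hb := @perLetter_eq_b _ a b k hab
  have hrep : ∀ t, s = (2 * k + 1) * q + t → IsRep k (l, t) →
      ∃ x : ℕ × ℕ, IsRep k x ∧ win a b k x.2 x.1 = win a b k s l := by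
    intro t ht hrep
    exact ⟨(l, t), hrep, by dsimp only; rw [ht, win_add]⟩
  generalize hQ : (2 * k + 1) * q = Q at *
  have hcase : (r = k ∧ n = k) ∨ (r = 2 * k ∧ n = k + 1) := by omega
  rcases hcase with ⟨rfl, rfl⟩ | ⟨rfl, rfl⟩
  · have h1 : Q + 1 ≤ s := by
      by_contra! hs
      have e := hloc 0 (by omega) (by omega)
      have e2 := (hb (i := 0 + n) (by omega)).2 (by omega)
      have := (hb (i := 0) (by omega)).1 (e.trans e2)
      omega
    have h2 : s + l ≤ Q + 3 * n := by
      by_contra! hs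
      have e := hloc (2 * n) (by omega) (by omega)
      have e2 := (hb (i := 2 * n) (by omega)).2 (by omega)
      have := (hb (i := 2 * n + n) (by omega)).1 (e.symm.trans e2)
      omega
    refine hrep (s - Q) (by omega) (Or.inr (Or.inl ?_))
    dsimp only
    omega
  · have h1 : Q + k + 1 ≤ s := by
      by_contra! hs
      have e := hloc k (by omega) (by omega)
      have e2 := (hb (i := k) (by omega)).2 (by omega)
      have := (hb (i := k + (k + 1)) (by omega)).1 (e.symm.trans e2)
      omega
    have h2 : s + l ≤ Q + 4 * k + 1 := by
      by_contra! hs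
      have e := hloc (3 * k) (by omega) (by omega)
      have e2 := (hb (i := 3 * k + (k + 1)) (by omega)).2 (by omega)
      have := (hb (i := 3 * k) (by omega)).1 (e.trans e2)
      omega
    refine hrep (s - Q) (by omega) (Or.inr (Or.inr (Or.inl ?_)))
    dsimp only
    omega

end Words

/-! ### Counting the representatives -/

/-- The pairs (length, start) with length `c + j`, `j < n`, and start in `[d, d + (n - j))`. -/
def triangle (c d n : ℕ) : Finset (ℕ × ℕ) :=
  (Finset.range n).biUnion fun j =>
    (Finset.range (n - j)).image fun i => (c + j, d + i)

theorem mem_triangle (c d n : ℕ) (x : ℕ × ℕ) :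
    x ∈ triangle c d n ↔ c ≤ x.1 ∧ d ≤ x.2 ∧ x.1 + x.2 < c + d + n := by
  obtain ⟨l, s⟩ := x
  simp only [triangle, Finset.mem_biUnion, Finset.mem_image, Finset.mem_range, Prod.mk.injEq]
  constructor
  · rintro ⟨j, hj, i, hi, rfl, rfl⟩
    omega
  · rintro ⟨h1, h2, h3⟩
    exact ⟨l - c, by omega, s - d, by omega, by omega, by omega⟩

theorem two_mul_card_triangle (c d n : ℕ) : 2 * (triangle c d n).card = n * (n + 1) := by
  rw [triangle, Finset.card_biUnion]
  · have : ∀ j ∈ Finset.range n,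
        ((Finset.range (n - j)).image fun i => (c + j, d + i)).card = n - j := by
      intro j _
      rw [Finset.card_image_of_injective, Finset.card_range]
      intro x y h
      simpa using h
    rw [Finset.sum_congr rfl this]
    clear this
    induction n with
    | zero => simp
    | succ n ih =>
      rw [Finset.sum_range_succ', Finset.sum_congr rfl (g := fun j => n - j)
        (fun j _ => by omega), mul_add, ih]
      simp only [Nat.sub_zero]
      ring
  · intro i _ j _ hij
    simp only [Function.onFun, Finset.disjoint_left, Finset.mem_image]
    rintro _ ⟨x, _, rfl⟩ ⟨y, _, h⟩
    simp only [Prod.mk.injEq] at h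
    omega

/-- The finite set of representatives. The long windows form a parallelogram and a triangle:
up to length `7k + 3` every start below `2k + 1` fits in the word, and beyond that one fewer for
each further letter. -/
def reps (k : ℕ) : Finset (ℕ × ℕ) :=
  (Finset.Icc 2 k ×ˢ {0}) ∪ (triangle (2 * k) 1 k ∪ (triangle (2 * k + 2) (k + 1) (k - 1) ∪
    ((Finset.Icc (4 * k + 2) (7 * k + 3) ×ˢ Finset.range (2 * k + 1)) ∪
      triangle (7 * k + 4) 0 (2 * k))))

theorem mem_reps (k : ℕ) (hk : 1 ≤ k) (x : ℕ × ℕ) : x ∈ reps k ↔ IsRep k x := by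
  simp only [reps, Finset.mem_union, Finset.mem_product, Finset.mem_Icc, Finset.mem_range,
    Finset.mem_singleton, mem_triangle, IsRep]
  omega

theorem card_reps (k : ℕ) (hk : 1 ≤ k) : (reps k).card = 9 * k ^ 2 + 9 * k + 1 := by
  have h1 := two_mul_card_triangle (2 * k) 1 k
  have h2 := two_mul_card_triangle (2 * k + 2) (k + 1) (k - 1)
  have h3 := two_mul_card_triangle (7 * k + 4) 0 (2 * k)
  unfold reps
  rw [Finset.card_union_of_disjoint, Finset.card_union_of_disjoint, Finset.card_union_of_disjoint,
    Finset.card_union_of_disjoint, Finset.card_product, Finset.card_product]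
  · simp only [Nat.card_Icc, Finset.card_range, Finset.card_singleton]
    obtain ⟨m, rfl⟩ : ∃ m, k = m + 1 := ⟨k - 1, by omega⟩
    rw [show 7 * (m + 1) + 3 + 1 - (4 * (m + 1) + 2) = 3 * m + 5 by omega,
      show m + 1 + 1 - 2 = m by omega]
    simp only [Nat.add_sub_cancel] at h2 ⊢
    nlinarith
  all_goals
    simp only [Finset.disjoint_left, Finset.mem_union, Finset.mem_product, Finset.mem_Icc,
      Finset.mem_range, Finset.mem_singleton, mem_triangle]
    intro x hx
    omega

/-- For distinct letters `a, b` and `k ≥ 1`, the word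
`w_k = (a^k b a^{k-1} b)^4 a^{k-1}` has length `9k + 3` and exactly
`9k² + 9k + 1` distinct rational power factors. -/
theorem stmt_18 {α : Type*} (a b : α) (hab : a ≠ b) (k : ℕ) (hk : 1 ≤ k)
    (w : List α)
    (hw : w = wpow (List.replicate k a ++ [b] ++ List.replicate (k - 1) a ++ [b]) 4
            ++ List.replicate (k - 1) a) :
    w.length = 9 * k + 3 ∧ RP w = 9 * k ^ 2 + 9 * k + 1 := by
  rw [word_eq k hab hk] at hw
  subst hw
  refine ⟨win_length a b k _ _, ?_⟩
  have hset : {v | v <:+: win a b k 0 (9 * k + 3) ∧ ∃ p, IsRatPow p v} =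
      Set.image (fun x : ℕ × ℕ => win a b k x.2 x.1) (reps k : Set (ℕ × ℕ)) := by
    ext v
    simp only [Set.mem_ofPred_eq, Set.mem_image, Finset.mem_coe, mem_reps k hk, infix_win_iff]
    constructor
    · rintro ⟨⟨s, l, hsl, rfl⟩, hr⟩
      exact classify k hab hk hsl hr
    · rintro ⟨x, hx, rfl⟩
      obtain ⟨h1, h2⟩ := hx.ratPow k hab hk
      exact ⟨⟨x.2, x.1, h1, rfl⟩, h2⟩
  rw [RP, hset, Set.InjOn.ncard_image, Set.ncard_coe_finset, card_reps k hk]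
  intro x hx y hy h
  rw [Finset.mem_coe, mem_reps k hk] at hx hy
  exact win_injOn k hab hk hx hy h
end
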